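/- Let M ≥ 1, N ≥ 1, let A be a real N×N matrix with ν = ‖A‖ > 0, let h > 0 satisfy hν ≤ 2, and let T = (M−1)h. Let Ã_f = I_{MN} − S ⊗ (I_N + h·A) be the forward-Euler block matrix, where S is the M×M subdiagonal shift matrix. Then the condition number of Ã_f satisfies κ(Ã_f) = ‖Ã_f‖·‖Ã_f⁻¹‖ ≤ 12·e^{νT}/(hν). -/

import Mathlib

open Matrix
open scoped Kronecker

/-- The ℓ²→ℓ² operator (spectral) norm of a matrix. -/
noncomputable def specNorm {𝕜 : Type*} [RCLike 𝕜] {n : Type*} [Fintype n] [DecidableEq n]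
    (A : Matrix n n 𝕜) : ℝ :=
  ‖LinearMap.toContinuousLinearMap (Matrix.toEuclideanLin A)‖

/-- The M×M subdiagonal shift matrix: entry (i,j) is 1 if i = j+1 and 0 otherwise. -/
def shiftMatrix (M : ℕ) : Matrix (Fin M) (Fin M) ℝ :=
  Matrix.of fun i j => if (i : ℕ) = (j : ℕ) + 1 then 1 else 0

/-!
Write `X = S ⊗ B` with `B = 1 + h • A`. As `S` is nilpotent of index at most `M`, so is `X`, and
`(1 - X)⁻¹` is the finite Neumann series `∑_{k < M} X ^ k`. Since `‖S‖ ≤ 1`, we get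
`‖X‖ ≤ ‖B‖ ≤ 1 + hν`, hence `‖1 - X‖ ≤ 2 + hν` and
`‖(1 - X)⁻¹‖ ≤ ∑_{k < M} (1 + hν) ^ k ≤ (1 + hν) ^ M / (hν) ≤ (1 + hν) e^{(M - 1)hν} / (hν)`.
For `hν ≤ 2` the product `(2 + hν)(1 + hν)` is at most `12`.
-/

section Kronecker

variable {R : Type*} [CommSemiring R]

lemma kronecker_pow {m n : Type*} [Fintype m] [DecidableEq m] [Fintype n] [DecidableEq n]
    (A : Matrix m m R) (B : Matrix n n R) (k : ℕ) : (A ⊗ₖ B) ^ k = (A ^ k) ⊗ₖ (B ^ k) := by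
  induction k with
  | zero => simp
  | succ k ih => rw [pow_succ, ih, pow_succ, pow_succ, mul_kronecker_mul]

lemma kronecker_mulVec_apply {l m n p : Type*} [Fintype m] [Fintype n]
    (A : Matrix l m R) (B : Matrix p n R) (v : m × n → R) (i : l) (k : p) :
    ((A ⊗ₖ B) *ᵥ v) (i, k) = (A *ᵥ fun j ↦ (B *ᵥ fun s ↦ v (j, s)) k) i := by
  simp only [mulVec, dotProduct, Fintype.sum_prod_type, kroneckerMap_apply, Finset.mul_sum,
    mul_assoc]

end Kronecker

section Nilpotent

variable {R n : Type*} [CommRing R] [Fintype n] [DecidableEq n]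

lemma inv_one_sub_eq_geom_sum {X : Matrix n n R} {k : ℕ} (hX : X ^ k = 0) :
    (1 - X)⁻¹ = ∑ i ∈ Finset.range k, X ^ i :=
  inv_eq_right_inv <| by rw [mul_neg_geom_sum, hX, sub_zero]

lemma pow_card_eq_zero_of_strictlyLowerTriangular [LinearOrder n] {A : Matrix n n R}
    (hA : ∀ i j, i ≤ j → A i j = 0) : A ^ Fintype.card n = 0 := by
  have htriangular : Aᵀ.IsUpperTriangular := fun i j hij ↦ hA j i (le_of_lt hij)
  have hcharpoly : A.charpoly = Polynomial.X ^ Fintype.card n := by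
    rw [← charpoly_transpose, charpoly_of_isUpperTriangular Aᵀ htriangular]
    simp [hA]
  simpa [hcharpoly] using aeval_self_charpoly A

end Nilpotent

section ShiftMatrix

lemma shiftMatrix_pow_self (M : ℕ) : shiftMatrix M ^ M = 0 := by
  have hlower (i j : Fin M) (hij : i ≤ j) : shiftMatrix M i j = 0 :=
    if_neg (Nat.lt_succ_of_le hij).ne
  simpa using pow_card_eq_zero_of_strictlyLowerTriangular hlower

lemma shiftMatrix_conjTranspose_mul_self (M : ℕ) :
    (shiftMatrix M)ᴴ * shiftMatrix M =
      diagonal fun j : Fin M ↦ if (j : ℕ) + 1 < M then 1 else 0 := by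
  ext i j
  have hterm (k : Fin M) : (shiftMatrix M)ᴴ i k * shiftMatrix M k j =
      if (k : ℕ) = j + 1 then (if i = j then 1 else 0) else 0 := by
    simp only [shiftMatrix, conjTranspose_apply, of_apply, star_trivial]
    grind
  simp only [mul_apply, hterm, diagonal_apply]
  by_cases hj : (j : ℕ) + 1 < M
  · rw [Finset.sum_eq_single ⟨j + 1, hj⟩] <;> grind
  · rw [Finset.sum_eq_zero] <;> grind

end ShiftMatrix

section L2OpNorm

open scoped Matrix.Norms.L2Operator

variable {𝕜 l m n p : Type*} [RCLike 𝕜] [Fintype l] [Fintype m] [Fintype n] [Fintype p]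
  [DecidableEq m] [DecidableEq n]

lemma specNorm_eq_l2_opNorm (A : Matrix n n 𝕜) : specNorm A = ‖A‖ := rfl

lemma l2_opNorm_le_iff {A : Matrix l n 𝕜} {c : ℝ} (hc : 0 ≤ c) :
    ‖A‖ ≤ c ↔ ∀ v : n → 𝕜, ∑ i, ‖(A *ᵥ v) i‖ ^ 2 ≤ c ^ 2 * ∑ j, ‖v j‖ ^ 2 := by
  rw [l2_opNorm_def, ContinuousLinearMap.opNorm_le_iff hc,
    (WithLp.equiv 2 (n → 𝕜)).forall_congr_left]
  refine forall_congr' fun v ↦ ?_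
  rw [← sq_le_sq₀ (norm_nonneg _) (by positivity), mul_pow, EuclideanSpace.norm_sq_eq,
    EuclideanSpace.norm_sq_eq]
  rfl

lemma sum_norm_sq_mulVec_le (A : Matrix l n 𝕜) (v : n → 𝕜) :
    ∑ i, ‖(A *ᵥ v) i‖ ^ 2 ≤ ‖A‖ ^ 2 * ∑ j, ‖v j‖ ^ 2 :=
  (l2_opNorm_le_iff (norm_nonneg A)).1 le_rfl v

lemma l2_opNorm_kronecker_le (A : Matrix l m 𝕜) (B : Matrix p n 𝕜) :
    ‖A ⊗ₖ B‖ ≤ ‖A‖ * ‖B‖ := by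
  refine (l2_opNorm_le_iff (by positivity)).2 fun v ↦ ?_
  calc ∑ x, ‖((A ⊗ₖ B) *ᵥ v) x‖ ^ 2
      = ∑ k, ∑ i, ‖(A *ᵥ fun j ↦ (B *ᵥ fun s ↦ v (j, s)) k) i‖ ^ 2 := by
        simp only [Fintype.sum_prod_type_right, kronecker_mulVec_apply]
    _ ≤ ∑ k, ‖A‖ ^ 2 * ∑ j, ‖(B *ᵥ fun s ↦ v (j, s)) k‖ ^ 2 := by
        gcongr
        apply sum_norm_sq_mulVec_le
    _ = ‖A‖ ^ 2 * ∑ j, ∑ k, ‖(B *ᵥ fun s ↦ v (j, s)) k‖ ^ 2 := by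
        rw [← Finset.mul_sum, Finset.sum_comm]
    _ ≤ ‖A‖ ^ 2 * ∑ j, ‖B‖ ^ 2 * ∑ s, ‖v (j, s)‖ ^ 2 := by
        gcongr
        apply sum_norm_sq_mulVec_le
    _ = (‖A‖ * ‖B‖) ^ 2 * ∑ x, ‖v x‖ ^ 2 := by
        rw [← Finset.mul_sum, Fintype.sum_prod_type, mul_pow, mul_assoc]

lemma l2_opNorm_one_le : ‖(1 : Matrix n n 𝕜)‖ ≤ 1 := by
  rw [← diagonal_one, l2_opNorm_diagonal]
  exact (pi_norm_const_le _).trans_eq norm_one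

lemma l2_opNorm_pow_le (A : Matrix n n 𝕜) (k : ℕ) : ‖A ^ k‖ ≤ ‖A‖ ^ k := by
  obtain rfl | hk := k.eq_zero_or_pos
  · simpa only [pow_zero] using l2_opNorm_one_le
  · exact norm_pow_le' A hk

lemma l2_opNorm_inv_one_sub_le {X : Matrix n n 𝕜} {k : ℕ} (hX : X ^ k = 0) :
    ‖(1 - X)⁻¹‖ ≤ ∑ i ∈ Finset.range k, ‖X‖ ^ i := by
  rw [inv_one_sub_eq_geom_sum hX]
  exact norm_sum_le_of_le _ fun i _ ↦ l2_opNorm_pow_le X i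

lemma l2_opNorm_one_add_smul_le (c : 𝕜) (A : Matrix n n 𝕜) : ‖1 + c • A‖ ≤ 1 + ‖c‖ * ‖A‖ :=
  (norm_add_le _ _).trans <| add_le_add l2_opNorm_one_le (norm_smul_le c A)

lemma l2_opNorm_shiftMatrix_le (M : ℕ) : ‖shiftMatrix M‖ ≤ 1 := by
  rw [← sq_le_one_iff₀ (norm_nonneg _), sq, ← l2_opNorm_conjTranspose_mul_self,
    shiftMatrix_conjTranspose_mul_self, l2_opNorm_diagonal, pi_norm_le_iff_of_nonneg zero_le_one]
  intro j
  split_ifs <;> simp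

lemma l2_opNorm_shiftMatrix_kronecker_le (M : ℕ) (B : Matrix n n ℝ) :
    ‖shiftMatrix M ⊗ₖ B‖ ≤ ‖B‖ :=
  (l2_opNorm_kronecker_le _ _).trans <|
    mul_le_of_le_one_left (norm_nonneg B) (l2_opNorm_shiftMatrix_le M)

lemma l2_opNorm_one_sub_shiftMatrix_kronecker_le (M : ℕ) (B : Matrix n n ℝ) :
    ‖1 - shiftMatrix M ⊗ₖ B‖ ≤ 1 + ‖B‖ :=
  (norm_sub_le _ _).trans <| add_le_add l2_opNorm_one_le (l2_opNorm_shiftMatrix_kronecker_le M B)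

lemma l2_opNorm_inv_one_sub_shiftMatrix_kronecker_le (M : ℕ) (B : Matrix n n ℝ) :
    ‖(1 - shiftMatrix M ⊗ₖ B)⁻¹‖ ≤ ∑ i ∈ Finset.range M, ‖B‖ ^ i := by
  have hnilpotent : (shiftMatrix M ⊗ₖ B) ^ M = 0 := by
    rw [kronecker_pow, shiftMatrix_pow_self, zero_kronecker]
  refine (l2_opNorm_inv_one_sub_le hnilpotent).trans ?_
  gcongr
  exact l2_opNorm_shiftMatrix_kronecker_le M B

end L2OpNorm

lemma geom_sum_one_add_le {x : ℝ} (hx : 0 < x) (M : ℕ) :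
    ∑ i ∈ Finset.range M, (1 + x) ^ i ≤ (1 + x) * Real.exp ((M - 1) * x) / x := by
  obtain _ | k := M
  · rw [Finset.sum_range_zero]
    positivity
  have hpow : (1 + x) ^ k ≤ Real.exp (k * x) := by
    rw [Real.exp_nat_mul]
    gcongr
    linarith [Real.add_one_le_exp x]
  rw [le_div_iff₀ hx]
  calc (∑ i ∈ Finset.range (k + 1), (1 + x) ^ i) * x
      = (1 + x) ^ (k + 1) - 1 := by simpa using geom_sum_mul (1 + x) (k + 1)
    _ ≤ (1 + x) * (1 + x) ^ k := by rw [pow_succ']; linarith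
    _ ≤ (1 + x) * Real.exp (((k + 1 : ℕ) - 1) * x) := by
      push_cast
      rw [add_sub_cancel_right]
      gcongr

open scoped Matrix.Norms.L2Operator in
theorem stmt6_general {n : Type*} [Fintype n] [DecidableEq n] (M : ℕ) {A : Matrix n n ℝ} {ν h : ℝ}
    (hA : specNorm A ≤ ν) (hν : 0 < ν) (hh : 0 < h) :
    specNorm (1 - shiftMatrix M ⊗ₖ (1 + h • A)) * specNorm (1 - shiftMatrix M ⊗ₖ (1 + h • A))⁻¹ ≤
      (2 + h * ν) * (1 + h * ν) * Real.exp (ν * ((M - 1) * h)) / (h * ν) := by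
  simp only [specNorm_eq_l2_opNorm] at hA ⊢
  have hstep : ‖1 + h • A‖ ≤ 1 + h * ν := by
    refine (l2_opNorm_one_add_smul_le h A).trans ?_
    rw [Real.norm_of_nonneg hh.le]
    gcongr
  have hnorm := l2_opNorm_one_sub_shiftMatrix_kronecker_le M (1 + h • A)
  have hinv := l2_opNorm_inv_one_sub_shiftMatrix_kronecker_le M (1 + h • A)
  calc ‖1 - shiftMatrix M ⊗ₖ (1 + h • A)‖ * ‖(1 - shiftMatrix M ⊗ₖ (1 + h • A))⁻¹‖
      ≤ (1 + ‖1 + h • A‖) * ∑ i ∈ Finset.range M, ‖1 + h • A‖ ^ i := by gcongr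
    _ ≤ (1 + (1 + h * ν)) * ∑ i ∈ Finset.range M, (1 + h * ν) ^ i := by gcongr
    _ ≤ (1 + (1 + h * ν)) * ((1 + h * ν) * Real.exp ((M - 1) * (h * ν)) / (h * ν)) := by
        gcongr
        exact geom_sum_one_add_le (mul_pos hh hν) M
    _ = (2 + h * ν) * (1 + h * ν) * Real.exp (ν * ((M - 1) * h)) / (h * ν) := by ring_nf

theorem stmt6 {M N : ℕ} (hM : 1 ≤ M) (hN : 1 ≤ N)
    (A : Matrix (Fin N) (Fin N) ℝ) (ν : ℝ) (hν : ν = specNorm A) (hνpos : 0 < ν)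
    (h : ℝ) (hh : 0 < h) (hhν : h * ν ≤ 2)
    (T : ℝ) (hT : T = ((M : ℝ) - 1) * h) :
    specNorm ((1 : Matrix (Fin M × Fin N) (Fin M × Fin N) ℝ)
        - shiftMatrix M ⊗ₖ ((1 : Matrix (Fin N) (Fin N) ℝ) + h • A)) *
      specNorm ((1 : Matrix (Fin M × Fin N) (Fin M × Fin N) ℝ)
        - shiftMatrix M ⊗ₖ ((1 : Matrix (Fin N) (Fin N) ℝ) + h • A))⁻¹
      ≤ 12 * Real.exp (ν * T) / (h * ν) := by
  have hconst : (2 + h * ν) * (1 + h * ν) ≤ 12 := by nlinarith [mul_pos hh hνpos]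
  subst hT
  exact (stmt6_general M hν.ge hνpos hh).trans (by gcongr)
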